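/- arXiv:1611.03189 — 6 statements merged into one kernel-verified Lean document; each statement's English description precedes it below -/
import Mathlib

section
/- Let K_ff, E_ff be symmetric n×n real matrices, K_fc, E_fc be n×m real matrices, K_cc a symmetric invertible m×m real matrix, and set K_cf := K_fcᵀ and E_cf := E_fcᵀ. Define A := (K_ff + E_ff) − (K_fc + E_fc)K_cc⁻¹(K_cf + E_cf), A_H := K_ff − K_fc K_cc⁻¹ K_cf, and let ‖E‖_F := (‖E_ff‖_F² + 2‖E_fc‖_F²)^{1/2} be the Frobenius norm of the block perturbation matrix E = [[E_ff, E_fc],[E_cf, 0]]. Then ‖A − A_H‖_F ≤ √(1 + 2‖K_cc⁻¹K_cf‖_F²) · ‖E‖_F + ‖K_cc⁻¹‖_F · ‖E‖_F². -/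
open Matrix

/-- Frobenius norm of a real matrix. -/
noncomputable def frobNorm {m n : ℕ} (M : Matrix (Fin m) (Fin n) ℝ) : ℝ :=
  Real.sqrt (∑ i, ∑ j, M i j ^ 2)

/-!
Expanding the products, the perturbation of the Schur complement is
`E_ff - E_fc (K_cc⁻¹ K_cf) - (K_fc K_cc⁻¹) E_cf - E_fc K_cc⁻¹ E_cf`. The first three terms are
linear in `E`: the Cauchy-Schwarz inequality for the vectors `(1, ‖K_cc⁻¹ K_cf‖, ‖K_fc K_cc⁻¹‖)`
and `(‖E_ff‖, ‖E_fc‖, ‖E_cf‖)` bounds their norm, and the second vector has Euclidean norm `‖E‖`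
because the cc-block of `E` vanishes. The last term is quadratic in `E`. For symmetric `K_cc` and
`K_cf = K_fcᵀ` the matrices `K_fc K_cc⁻¹` and `K_cc⁻¹ K_cf` are transposes of each other.
-/

open scoped Matrix.Norms.Frobenius

theorem add_mul_add_mul_le_sqrt_mul_sqrt (a b c x y : ℝ) :
    a + b * x + y * c ≤ √(1 + x ^ 2 + y ^ 2) * √(a ^ 2 + b ^ 2 + c ^ 2) := by
  simpa [Fin.sum_univ_three, mul_comm b x] using
    Real.sum_mul_le_sqrt_mul_sqrt Finset.univ ![1, x, y] ![a, b, c]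

theorem schur_complement_add_sub {l m n o R : Type*} [Fintype m] [Fintype n] [NonUnitalRing R]
    (Kff Eff : Matrix l o R) (Kfc Efc : Matrix l m R) (X : Matrix m n R)
    (Kcf Ecf : Matrix n o R) :
    ((Kff + Eff) - (Kfc + Efc) * X * (Kcf + Ecf)) - (Kff - Kfc * X * Kcf) =
      (Eff - Efc * (X * Kcf) - (Kfc * X) * Ecf) - Efc * X * Ecf := by
  simp only [Matrix.mul_add, Matrix.add_mul, Matrix.mul_assoc]
  abel

theorem frobNorm_eq_norm {m n : ℕ} (M : Matrix (Fin m) (Fin n) ℝ) : frobNorm M = ‖M‖ := by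
  simp [frobNorm, frobenius_norm_def, Real.sqrt_eq_rpow]

theorem frobenius_norm_mul_inv_of_isSymm {l m R : Type*} [Fintype l] [Fintype m] [DecidableEq m]
    [SeminormedCommRing R] {S : Matrix m m R} (hS : S.IsSymm) (B : Matrix l m R) :
    ‖B * S⁻¹‖ = ‖S⁻¹ * Bᵀ‖ := by
  rw [← frobenius_norm_transpose, transpose_mul, transpose_nonsing_inv, hS.eq]

section SeminormedEntries

variable {l m n o α : Type*} [Fintype l] [Fintype m] [Fintype n] [Fintype o]
  [SeminormedAddCommGroup α]

theorem frobenius_norm_sq (M : Matrix m n α) : ‖M‖ ^ 2 = ∑ i, ∑ j, ‖M i j‖ ^ 2 := by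
  rw [frobenius_norm_def, ← Real.sqrt_eq_rpow, Real.sq_sqrt (by positivity)]
  simp only [Real.rpow_two]

variable (A : Matrix l n α) (B : Matrix l o α) (C : Matrix m n α) (D : Matrix m o α)

theorem frobenius_norm_fromBlocks_sq :
    ‖fromBlocks A B C D‖ ^ 2 = ‖A‖ ^ 2 + ‖B‖ ^ 2 + ‖C‖ ^ 2 + ‖D‖ ^ 2 := by
  simp only [frobenius_norm_sq, Fintype.sum_sum_type, fromBlocks_apply₁₁, fromBlocks_apply₁₂,
    fromBlocks_apply₂₁, fromBlocks_apply₂₂, Finset.sum_add_distrib]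
  ring

theorem frobenius_norm_fromBlocks_zero₂₂ :
    ‖fromBlocks A B C (0 : Matrix m o α)‖ = √(‖A‖ ^ 2 + ‖B‖ ^ 2 + ‖C‖ ^ 2) := by
  rw [← Real.sqrt_sq (norm_nonneg (fromBlocks A B C 0)), frobenius_norm_fromBlocks_sq]
  simp

theorem frobenius_norm_le_norm_fromBlocks₁₂ : ‖B‖ ≤ ‖fromBlocks A B C D‖ := by
  refine le_of_sq_le_sq ?_ (norm_nonneg _)
  rw [frobenius_norm_fromBlocks_sq]
  linarith [sq_nonneg ‖A‖, sq_nonneg ‖C‖, sq_nonneg ‖D‖]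

theorem frobenius_norm_le_norm_fromBlocks₂₁ : ‖C‖ ≤ ‖fromBlocks A B C D‖ := by
  refine le_of_sq_le_sq ?_ (norm_nonneg _)
  rw [frobenius_norm_fromBlocks_sq]
  linarith [sq_nonneg ‖A‖, sq_nonneg ‖B‖, sq_nonneg ‖D‖]

end SeminormedEntries

section RCLikeEntries

variable {l m n o 𝕜 : Type*} [Fintype l] [Fintype m] [Fintype n] [Fintype o] [RCLike 𝕜]

theorem frobenius_norm_sub_mul_sub_mul_le (A : Matrix l n 𝕜) (B : Matrix l o 𝕜)
    (C : Matrix m n 𝕜) (U : Matrix l m 𝕜) (V : Matrix o n 𝕜) :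
    ‖A - B * V - U * C‖ ≤
      √(1 + ‖V‖ ^ 2 + ‖U‖ ^ 2) * ‖fromBlocks A B C (0 : Matrix m o 𝕜)‖ :=
  calc ‖A - B * V - U * C‖
      ≤ ‖A‖ + ‖B * V‖ + ‖U * C‖ := by grw [norm_sub_le, norm_sub_le]
    _ ≤ ‖A‖ + ‖B‖ * ‖V‖ + ‖U‖ * ‖C‖ := by grw [frobenius_norm_mul B V, frobenius_norm_mul U C]
    _ ≤ √(1 + ‖V‖ ^ 2 + ‖U‖ ^ 2) * √(‖A‖ ^ 2 + ‖B‖ ^ 2 + ‖C‖ ^ 2) :=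
      add_mul_add_mul_le_sqrt_mul_sqrt ..
    _ = √(1 + ‖V‖ ^ 2 + ‖U‖ ^ 2) * ‖fromBlocks A B C 0‖ := by
      rw [frobenius_norm_fromBlocks_zero₂₂]

theorem frobenius_norm_mul_mul_le_mul_norm_fromBlocks_sq (A : Matrix l n 𝕜) (B : Matrix l o 𝕜)
    (C : Matrix m n 𝕜) (D : Matrix m o 𝕜) (X : Matrix o m 𝕜) :
    ‖B * X * C‖ ≤ ‖X‖ * ‖fromBlocks A B C D‖ ^ 2 :=
  calc ‖B * X * C‖
      ≤ ‖B‖ * ‖X‖ * ‖C‖ := by grw [frobenius_norm_mul, frobenius_norm_mul]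
    _ ≤ ‖fromBlocks A B C D‖ * ‖X‖ * ‖fromBlocks A B C D‖ := by
      gcongr
      · exact frobenius_norm_le_norm_fromBlocks₁₂ A B C D
      · exact frobenius_norm_le_norm_fromBlocks₂₁ A B C D
    _ = ‖X‖ * ‖fromBlocks A B C D‖ ^ 2 := by ring

theorem hierarchical_factorization_error_estimate_general [DecidableEq m]
    (Kff Eff : Matrix l n 𝕜) (Kfc Efc : Matrix l m 𝕜) (Kcf Ecf : Matrix m n 𝕜)
    (Kcc : Matrix m m 𝕜) [Invertible Kcc] :
    ‖((Kff + Eff) - (Kfc + Efc) * ⅟Kcc * (Kcf + Ecf)) - (Kff - Kfc * ⅟Kcc * Kcf)‖ ≤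
      √(1 + ‖⅟Kcc * Kcf‖ ^ 2 + ‖Kfc * ⅟Kcc‖ ^ 2) *
          ‖fromBlocks Eff Efc Ecf (0 : Matrix m m 𝕜)‖
        + ‖⅟Kcc‖ * ‖fromBlocks Eff Efc Ecf (0 : Matrix m m 𝕜)‖ ^ 2 := by
  rw [schur_complement_add_sub]
  grw [norm_sub_le, frobenius_norm_sub_mul_sub_mul_le,
    frobenius_norm_mul_mul_le_mul_norm_fromBlocks_sq Eff Efc Ecf 0]

end RCLikeEntries

/-- Error estimate for the hierarchical factorization.  With
`A := (K_ff + E_ff) − (K_fc + E_fc)K_cc⁻¹(K_cf + E_cf)`,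
`A_H := K_ff − K_fc K_cc⁻¹ K_cf`, `K_cf := K_fcᵀ`, `E_cf := E_fcᵀ`, and
`‖E‖_F := (‖E_ff‖_F² + 2‖E_fc‖_F²)^{1/2}`, one has
`‖A − A_H‖_F ≤ √(1 + 2‖K_cc⁻¹K_cf‖_F²)·‖E‖_F + ‖K_cc⁻¹‖_F·‖E‖_F²`. -/
theorem hierarchical_factorization_error_estimate {n m : ℕ}
    (Kff Eff : Matrix (Fin n) (Fin n) ℝ)
    (Kfc Efc : Matrix (Fin n) (Fin m) ℝ)
    (Kcc : Matrix (Fin m) (Fin m) ℝ)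
    (hKff : Kff.IsSymm) (hEff : Eff.IsSymm) (hKcc : Kcc.IsSymm)
    (hinv : IsUnit Kcc.det)
    (A AH : Matrix (Fin n) (Fin n) ℝ)
    (hA : A = (Kff + Eff) - (Kfc + Efc) * Kcc⁻¹ * (Kfcᵀ + Efcᵀ))
    (hAH : AH = Kff - Kfc * Kcc⁻¹ * Kfcᵀ)
    (EF : ℝ) (hEF : EF = Real.sqrt (frobNorm Eff ^ 2 + 2 * frobNorm Efc ^ 2)) :
    frobNorm (A - AH) ≤
      Real.sqrt (1 + 2 * frobNorm (Kcc⁻¹ * Kfcᵀ) ^ 2) * EF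
        + frobNorm Kcc⁻¹ * EF ^ 2 := by
  let := Kcc.invertibleOfIsUnitDet hinv
  simpa only [hA, hAH, hEF, frobNorm_eq_norm, frobenius_norm_fromBlocks_zero₂₂,
    invOf_eq_nonsing_inv, frobenius_norm_mul_inv_of_isSymm hKcc, frobenius_norm_transpose,
    add_assoc, ← two_mul] using
    hierarchical_factorization_error_estimate_general Kff Eff Kfc Efc Kfcᵀ Efcᵀ Kcc
end

section
/- Let A be an n×n real symmetric positive definite matrix, μ > 0, and let u, w ∈ ℝⁿ satisfy uᵀAw = 0. Assume wᵀAw ≥ μ‖w‖² and (2u+w)ᵀA(2u+w) ≥ μ‖2u+w‖². Then (u+w)ᵀA(u+w) ≥ (√3/2)·μ·‖w‖·‖2u+w‖. -/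
open Matrix

/-- Euclidean norm on ℝⁿ. -/
noncomputable def euclNorm {n : ℕ} (v : Fin n → ℝ) : ℝ := Real.sqrt (∑ i, v i ^ 2)

/-!
If `u` and `w` are orthogonal for a quadratic form `Q`, then `Q (t u + w) = t² Q u + Q w`, and
eliminating `Q u` gives `t² Q (u + w) = (t² - 1) Q w + Q (t u + w)`. The two lower bounds on the
right combine by AM-GM into a multiple of the product; the constant `√3 / 2` is
`2 √(t² - 1) / t²` at `t = 2`.
-/

section Orthogonal

variable {R M N : Type*} [CommRing R] [AddCommGroup M] [Module R M] [AddCommGroup N] [Module R N]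
  {Q : QuadraticMap R M N} {u w : M}

theorem map_smul_add_of_isOrtho (h : Q.IsOrtho u w) (t : R) :
    Q (t • u + w) = t ^ 2 • Q u + Q w := by
  have hpolar : Q.polarBilin u w = 0 := QuadraticMap.isOrtho_polarBilin.mpr h
  have htu : Q.IsOrtho (t • u) w :=
    QuadraticMap.isOrtho_polarBilin.mp <| by simp [hpolar]
  rw [QuadraticMap.isOrtho_def.mp htu, Q.map_smul, sq]

theorem sq_smul_map_add_of_isOrtho (h : Q.IsOrtho u w) (t : R) :
    t ^ 2 • Q (u + w) = (t ^ 2 - 1) • Q w + Q (t • u + w) := by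
  rw [map_smul_add_of_isOrtho h, QuadraticMap.isOrtho_def.mp h]
  module

end Orthogonal

section Matrix

variable {R ι : Type*} [CommRing R] [Fintype ι] [DecidableEq ι] {A : Matrix ι ι R}

theorem toQuadraticForm'_apply_eq_dotProduct_mulVec (A : Matrix ι ι R) (v : ι → R) :
    A.toQuadraticForm' v = v ⬝ᵥ A *ᵥ v :=
  Matrix.toLinearMap₂'_apply' A v v

theorem isOrtho_toQuadraticForm'_of_dotProduct_mulVec_eq_zero (hA : A.IsSymm) {u w : ι → R}
    (h : u ⬝ᵥ A *ᵥ w = 0) : A.toQuadraticForm'.IsOrtho u w := by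
  have hswap : w ⬝ᵥ A *ᵥ u = 0 := by
    rw [← dotProduct_transpose_mulVec, hA.eq, h]
  simp only [QuadraticMap.isOrtho_def, toQuadraticForm'_apply_eq_dotProduct_mulVec, mulVec_add,
    add_dotProduct, dotProduct_add, h, hswap, add_zero, zero_add]

end Matrix

theorem two_mul_sqrt_mul_mul_le_mul_sq_add_sq {c : ℝ} (hc : 0 ≤ c) (a b : ℝ) :
    2 * √c * a * b ≤ c * a ^ 2 + b ^ 2 := by
  calc 2 * √c * a * b = 2 * (√c * a) * b := by ring
    _ ≤ (√c * a) ^ 2 + b ^ 2 := two_mul_le_add_sq _ _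
    _ = c * a ^ 2 + b ^ 2 := by rw [mul_pow, Real.sq_sqrt hc]

section RealQuadraticForm

variable {V : Type*} [AddCommGroup V] [Module ℝ V] {Q : QuadraticForm ℝ V} {u w : V} {μ a b : ℝ}

theorem two_mul_sqrt_mul_le_sq_mul_map_add_of_isOrtho (horth : Q.IsOrtho u w) {t : ℝ}
    (ht : 1 ≤ t ^ 2) (hμ : 0 ≤ μ) (hw : μ * a ^ 2 ≤ Q w) (htuw : μ * b ^ 2 ≤ Q (t • u + w)) :
    2 * √(t ^ 2 - 1) * μ * a * b ≤ t ^ 2 * Q (u + w) := by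
  have hc : 0 ≤ t ^ 2 - 1 := sub_nonneg.mpr ht
  calc 2 * √(t ^ 2 - 1) * μ * a * b = μ * (2 * √(t ^ 2 - 1) * a * b) := by ring
    _ ≤ μ * ((t ^ 2 - 1) * a ^ 2 + b ^ 2) := by
        gcongr
        exact two_mul_sqrt_mul_mul_le_mul_sq_add_sq hc a b
    _ = (t ^ 2 - 1) * (μ * a ^ 2) + μ * b ^ 2 := by ring
    _ ≤ (t ^ 2 - 1) * Q w + Q (t • u + w) := by gcongr
    _ = t ^ 2 * Q (u + w) := (sq_smul_map_add_of_isOrtho horth t).symm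

theorem rayleigh_lower_bound_A_orthogonal_general (horth : Q.IsOrtho u w) (hμ : 0 ≤ μ)
    (hw : μ * a ^ 2 ≤ Q w) (h2uw : μ * b ^ 2 ≤ Q ((2 : ℝ) • u + w)) :
    √3 / 2 * μ * a * b ≤ Q (u + w) := by
  have hbound := two_mul_sqrt_mul_le_sq_mul_map_add_of_isOrtho horth (by norm_num) hμ hw h2uw
  rw [show (2 : ℝ) ^ 2 - 1 = 3 by norm_num] at hbound
  linarith

end RealQuadraticForm

/-- For an SPD matrix `A`, A-orthogonal vectors `u, w` with
`wᵀAw ≥ μ‖w‖²` and `(2u+w)ᵀA(2u+w) ≥ μ‖2u+w‖²` (`μ > 0`), one has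
`(u+w)ᵀA(u+w) ≥ (√3/2)·μ·‖w‖·‖2u+w‖`. -/
theorem rayleigh_lower_bound_A_orthogonal {n : ℕ}
    (A : Matrix (Fin n) (Fin n) ℝ) (hA : A.PosDef)
    (μ : ℝ) (hμ : 0 < μ) (u w : Fin n → ℝ)
    (horth : u ⬝ᵥ A.mulVec w = 0)
    (hw : μ * euclNorm w ^ 2 ≤ w ⬝ᵥ A.mulVec w)
    (h2uw : μ * euclNorm ((2 : ℝ) • u + w) ^ 2
              ≤ ((2 : ℝ) • u + w) ⬝ᵥ A.mulVec ((2 : ℝ) • u + w)) :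
    Real.sqrt 3 / 2 * μ * euclNorm w * euclNorm ((2 : ℝ) • u + w)
      ≤ (u + w) ⬝ᵥ A.mulVec (u + w) := by
  simp only [← toQuadraticForm'_apply_eq_dotProduct_mulVec] at hw h2uw ⊢
  exact rayleigh_lower_bound_A_orthogonal_general
    (isOrtho_toQuadraticForm'_of_dotProduct_mulVec_eq_zero
      (isHermitian_iff_isSymm.mp hA.isHermitian) horth) hμ.le hw h2uw
end

section
/- Let A be an n×n real symmetric positive definite matrix with largest eigenvalue λ_max, and let A_H be an n×n real symmetric matrix. Let S₁,…,S_N be subspaces of ℝⁿ forming an A-orthogonal direct sum of ℝⁿ: every v ∈ ℝⁿ is a sum v = v₁ + … + v_N with vᵢ ∈ Sᵢ, Sᵢ ∩ (Σ_{j≠i} Sⱼ) = {0}, and vᵢᵀAvⱼ = 0 whenever vᵢ ∈ Sᵢ, vⱼ ∈ Sⱼ with i ≠ j. Assume: (i) for each i there is εᵢ ≥ 0 with ‖(A − A_H)v‖ ≤ εᵢ·λ_max·‖v‖ for all v ∈ Sᵢ; (ii) for each i there is μᵢ > 0 with vᵀAv ≥ μᵢ‖v‖² for all v ∈ Pᵢ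 := Sᵢ + S_{i+1} + … + S_N; (iii) δ := ε_N·λ_max/μ_N + (2/√3)·Σ_{i=1}^{N−1} εᵢ·λ_max/μᵢ < 1. Then for every v ∈ ℝⁿ, (1 − δ)·vᵀAv ≤ vᵀA_H v ≤ (1 + δ)·vᵀAv; in particular A_H is symmetric positive definite and every eigenvalue ρ of A_H⁻¹A satisfies 1/(1+δ) ≤ ρ ≤ 1/(1−δ), so κ(A_H⁻¹A) ≤ (1+δ)/(1−δ). -/
open Matrix

/-- Euclidean norm on ℝⁿ. -/
noncomputable def enorm {n : ℕ} (v : Fin n → ℝ) : ℝ := Real.sqrt (∑ i, v i ^ 2)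

/-!
Put `E := A - A_H` and decompose `v = ∑ cᵢ` along the `Sᵢ`. Since `E` is symmetric, its off-diagonal
terms can be collected as `vᵀEv = ∑ cᵢᵀE wᵢ` with `wᵢ := cᵢ + 2 ∑_{j > i} cⱼ ∈ Pᵢ`, so the
hypotheses on `Sᵢ` and `Pᵢ` give `|cᵢᵀE wᵢ| ≤ (εᵢ λ_max / μᵢ) √(cᵢᵀA cᵢ) √(wᵢᵀA wᵢ)`. Write
`aᵢ := cᵢᵀA cᵢ` and `q := vᵀAv`. By `A`-orthogonality `q = ∑ aᵢ` and
`wᵢᵀA wᵢ = aᵢ + 4 ∑_{j > i} aⱼ ≤ 4 q - 3 aᵢ`, and `max_a a (4 q - 3 a) = (4 / 3) q²` is where the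
constant `2 / √3` comes from; for the last index `w = c` and the constant is `1`.
-/

theorem apply_sum_self_of_iIsOrtho {ι R V : Type*} [CommSemiring R] [AddCommMonoid V] [Module R V]
    {B : LinearMap.BilinForm R V} {c : ι → V} (hc : B.iIsOrtho c) (s : Finset ι) :
    B (∑ i ∈ s, c i) (∑ i ∈ s, c i) = ∑ i ∈ s, B (c i) (c i) := by
  simp only [LinearMap.BilinForm.sum_left, LinearMap.BilinForm.sum_right]
  refine Finset.sum_congr rfl fun i hi => Finset.sum_eq_single_of_mem i hi fun j _ hji => ?_
  exact LinearMap.BilinForm.iIsOrtho_def.mp hc j i hji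

section DoubledTail

variable {ι R V : Type*} [LinearOrder ι] [LocallyFiniteOrderTop ι]

/-- The vector `cᵢ + 2 ∑_{j > i} cⱼ`, which pairs with `cᵢ` so as to collect all terms `(i, j)` and
`(j, i)` with `j ≥ i` of a symmetric form evaluated at `∑ cᵢ`. -/
def doubledTail [AddCommMonoid V] (c : ι → V) (i : ι) : V :=
  c i + 2 • ∑ j ∈ Finset.Ioi i, c j

theorem doubledTail_of_isMax [AddCommMonoid V] (c : ι → V) {i : ι} (hi : IsMax i) :
    doubledTail c i = c i := by
  simp [doubledTail, Finset.Ioi_eq_empty.mpr hi]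

variable [CommSemiring R]

theorem doubledTail_mem_iSup [AddCommMonoid V] [Module R V] {S : ι → Submodule R V} {c : ι → V}
    (hc : ∀ i, c i ∈ S i) (i : ι) : doubledTail c i ∈ ⨆ j, ⨆ (_ : i ≤ j), S j := by
  have mem_of_le {j : ι} (hij : i ≤ j) : c j ∈ ⨆ j, ⨆ (_ : i ≤ j), S j :=
    Submodule.mem_iSup_of_mem j (Submodule.mem_iSup_of_mem hij (hc j))
  exact add_mem (mem_of_le le_rfl)
    (nsmul_mem (sum_mem fun j hj => mem_of_le (Finset.mem_Ioi.mp hj).le) 2)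

variable [AddCommMonoid V] [Module R V] {B : LinearMap.BilinForm R V} {c : ι → V}

theorem apply_sum_self_eq_sum_apply_doubledTail [Fintype ι] [LocallyFiniteOrderBot ι]
    (hB : B.IsSymm) (c : ι → V) :
    B (∑ i, c i) (∑ i, c i) = ∑ i, B (c i) (doubledTail c i) := by
  have off_diag : ∑ i, ∑ j ∈ {i}ᶜ, B (c j) (c i) = ∑ i, ∑ j ∈ Finset.Ioi i, 2 * B (c i) (c j) := by
    rw [← Finset.sum_sum_Ioi_add_eq_sum_sum_off_diag]
    simp only [hB.eq (c _) (c _), two_mul]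
  calc B (∑ i, c i) (∑ i, c i)
      = ∑ i, ∑ j, B (c j) (c i) := by
        simp only [LinearMap.BilinForm.sum_left, LinearMap.BilinForm.sum_right]
    _ = ∑ i, B (c i) (c i) + ∑ i, ∑ j ∈ {i}ᶜ, B (c j) (c i) := by
        rw [← Finset.sum_add_distrib]
        exact Finset.sum_congr rfl fun i _ => Fintype.sum_eq_add_sum_compl i _
    _ = ∑ i, B (c i) (doubledTail c i) := by
        simp only [off_diag, doubledTail, map_add, map_nsmul, map_sum, Finset.mul_sum,
          Finset.sum_add_distrib, nsmul_eq_mul, Nat.cast_ofNat]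

theorem apply_doubledTail_self_of_iIsOrtho (hc : B.iIsOrtho c) (i : ι) :
    B (doubledTail c i) (doubledTail c i)
      = B (c i) (c i) + 4 * ∑ j ∈ Finset.Ioi i, B (c j) (c j) := by
  have ortho := LinearMap.BilinForm.iIsOrtho_def.mp hc
  have head_tail : B (c i) (∑ j ∈ Finset.Ioi i, c j) = 0 := by
    rw [LinearMap.BilinForm.sum_right]
    exact Finset.sum_eq_zero fun j hj => ortho i j (Finset.mem_Ioi.mp hj).ne
  have tail_head : B (∑ j ∈ Finset.Ioi i, c j) (c i) = 0 := by
    rw [LinearMap.BilinForm.sum_left]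
    exact Finset.sum_eq_zero fun j hj => ortho j i (Finset.mem_Ioi.mp hj).ne'
  simp only [doubledTail, two_nsmul, map_add, LinearMap.add_apply, head_tail, tail_head,
    apply_sum_self_of_iIsOrtho hc]
  ring

end DoubledTail

theorem sqrt_mul_sqrt_add_four_mul_le {a b q : ℝ} (ha : 0 ≤ a) (hb : 0 ≤ b) (hq : a + b ≤ q) :
    √a * √(a + 4 * b) ≤ 2 / √3 * q := by
  rw [← Real.sqrt_mul ha]
  refine Real.sqrt_le_iff.mpr ⟨mul_nonneg (by positivity) ((add_nonneg ha hb).trans hq), ?_⟩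
  have sq_const : (2 / √3) ^ 2 = 4 / 3 := by norm_num [div_pow]
  rw [mul_pow, sq_const]
  nlinarith [sq_nonneg (3 * a - 2 * q), mul_le_mul_of_nonneg_left hq ha]

section FormBound

variable {V : Type*} [AddCommMonoid V] [Module ℝ V] {A E : LinearMap.BilinForm ℝ V}

theorem sqrt_mul_sqrt_apply_doubledTail_le {ι : Type*} [LinearOrder ι] [LocallyFiniteOrderTop ι]
    [Fintype ι] {c : ι → V} (hc : A.iIsOrtho c) (hA : ∀ i, 0 ≤ A (c i) (c i)) (i : ι) :
    √(A (c i) (c i)) * √(A (doubledTail c i) (doubledTail c i))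
      ≤ 2 / √3 * A (∑ i, c i) (∑ i, c i) := by
  rw [apply_doubledTail_self_of_iIsOrtho hc, apply_sum_self_of_iIsOrtho hc]
  refine sqrt_mul_sqrt_add_four_mul_le (hA i) (Finset.sum_nonneg fun j _ => hA j) ?_
  rw [← Finset.sum_insert (f := fun j => A (c j) (c j)) Finset.notMem_Ioi_self]
  exact Finset.sum_le_univ_sum_of_nonneg hA

theorem abs_apply_sum_self_le_of_iIsOrtho {N : ℕ} (hE : E.IsSymm) {c : Fin (N + 1) → V}
    (hc : A.iIsOrtho c) (hA : ∀ i, 0 ≤ A (c i) (c i)) {θ : Fin (N + 1) → ℝ} (hθ : ∀ i, 0 ≤ θ i)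
    (hEA : ∀ i, |E (c i) (doubledTail c i)|
      ≤ θ i * (√(A (c i) (c i)) * √(A (doubledTail c i) (doubledTail c i)))) :
    |E (∑ i, c i) (∑ i, c i)|
      ≤ (θ (Fin.last N) + 2 / √3 * ∑ i : Fin N, θ i.castSucc) * A (∑ i, c i) (∑ i, c i) := by
  set q := A (∑ i, c i) (∑ i, c i) with hq
  have bound_last : |E (c (Fin.last N)) (doubledTail c (Fin.last N))| ≤ θ (Fin.last N) * q := by
    have apply_last_le : A (c (Fin.last N)) (c (Fin.last N)) ≤ q := by
      rw [hq, apply_sum_self_of_iIsOrtho hc]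
      exact Finset.single_le_sum (fun j _ => hA j) (Finset.mem_univ _)
    have doubledTail_last : doubledTail c (Fin.last N) = c (Fin.last N) :=
      doubledTail_of_isMax c fun j _ => Fin.le_last j
    refine (hEA _).trans (mul_le_mul_of_nonneg_left ?_ (hθ _))
    rwa [doubledTail_last, Real.mul_self_sqrt (hA _)]
  have bound (i : Fin N) :
      |E (c i.castSucc) (doubledTail c i.castSucc)| ≤ θ i.castSucc * (2 / √3 * q) :=
    (hEA _).trans
      (mul_le_mul_of_nonneg_left (sqrt_mul_sqrt_apply_doubledTail_le hc hA _) (hθ _))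
  calc |E (∑ i, c i) (∑ i, c i)|
      = |∑ i, E (c i) (doubledTail c i)| := by rw [apply_sum_self_eq_sum_apply_doubledTail hE]
    _ ≤ ∑ i, |E (c i) (doubledTail c i)| := Finset.abs_sum_le_sum_abs _ _
    _ ≤ ∑ i : Fin N, θ i.castSucc * (2 / √3 * q) + θ (Fin.last N) * q := by
        rw [Fin.sum_univ_castSucc]
        exact add_le_add (Finset.sum_le_sum fun i _ => bound i) bound_last
    _ = _ := by rw [← Finset.sum_mul]; ring

end FormBound

section EuclideanBound

variable {n : ℕ}

theorem enorm_nonneg (v : Fin n → ℝ) : 0 ≤ _root_.enorm v :=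
  Real.sqrt_nonneg _

theorem abs_dotProduct_le_enorm_mul_enorm (v w : Fin n → ℝ) :
    |v ⬝ᵥ w| ≤ _root_.enorm v * _root_.enorm w := by
  simpa [_root_.enorm, EuclideanSpace.norm_eq, EuclideanSpace.inner_toLp_toLp, dotProduct_comm]
    using abs_real_inner_le_norm (WithLp.toLp 2 v) (WithLp.toLp 2 w)

theorem abs_dotProduct_mulVec_le_div_mul_sqrt {E : Matrix (Fin n) (Fin n) ℝ}
    (hE : E.IsSymm) {x w : Fin n → ℝ} {η μ a b : ℝ} (hη : 0 ≤ η) (hμ : 0 < μ)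
    (hEx : _root_.enorm (E *ᵥ x) ≤ η * _root_.enorm x)
    (hx : μ * _root_.enorm x ^ 2 ≤ a) (hw : μ * _root_.enorm w ^ 2 ≤ b) :
    |x ⬝ᵥ E *ᵥ w| ≤ η / μ * (√a * √b) := by
  have sqrt_mul_enorm_le {u : Fin n → ℝ} {s : ℝ} (hu : μ * _root_.enorm u ^ 2 ≤ s) :
      √μ * _root_.enorm u ≤ √s :=
    Real.le_sqrt_of_sq_le (by rwa [mul_pow, Real.sq_sqrt hμ.le])
  calc |x ⬝ᵥ E *ᵥ w|
      = |(E *ᵥ x) ⬝ᵥ w| := by rw [dotProduct_mulVec, ← mulVec_transpose, hE.eq]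
    _ ≤ _root_.enorm (E *ᵥ x) * _root_.enorm w := abs_dotProduct_le_enorm_mul_enorm _ _
    _ ≤ η * _root_.enorm x * _root_.enorm w := mul_le_mul_of_nonneg_right hEx (enorm_nonneg w)
    _ = η / μ * ((√μ * _root_.enorm x) * (√μ * _root_.enorm w)) := by
        rw [mul_mul_mul_comm, Real.mul_self_sqrt hμ.le]
        field_simp
    _ ≤ η / μ * (√a * √b) :=
        mul_le_mul_of_nonneg_left
          (mul_le_mul (sqrt_mul_enorm_le hx) (sqrt_mul_enorm_le hw)
            (mul_nonneg (Real.sqrt_nonneg μ) (enorm_nonneg w)) (Real.sqrt_nonneg a))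
          (div_nonneg hη hμ.le)

theorem abs_dotProduct_mulVec_sum_self_le {N : ℕ} {A E : Matrix (Fin n) (Fin n) ℝ} (hE : E.IsSymm)
    {S : Fin (N + 1) → Submodule ℝ (Fin n → ℝ)}
    (horth : ∀ i j, i ≠ j → ∀ vi ∈ S i, ∀ vj ∈ S j, vi ⬝ᵥ A *ᵥ vj = 0)
    {η μ : Fin (N + 1) → ℝ} (hη : ∀ i, 0 ≤ η i) (hμ : ∀ i, 0 < μ i)
    (hES : ∀ i, ∀ v ∈ S i, _root_.enorm (E *ᵥ v) ≤ η i * _root_.enorm v)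
    (hAS : ∀ i, ∀ v ∈ ⨆ j, ⨆ (_ : i ≤ j), S j, μ i * _root_.enorm v ^ 2 ≤ v ⬝ᵥ A *ᵥ v)
    {c : Fin (N + 1) → Fin n → ℝ} (hc : ∀ i, c i ∈ S i) :
    |(∑ i, c i) ⬝ᵥ E *ᵥ ∑ i, c i|
      ≤ (η (Fin.last N) / μ (Fin.last N) + 2 / √3 * ∑ i : Fin N, η i.castSucc / μ i.castSucc)
        * ((∑ i, c i) ⬝ᵥ A *ᵥ ∑ i, c i) := by
  have coercive (i) : μ i * _root_.enorm (c i) ^ 2 ≤ c i ⬝ᵥ A *ᵥ c i :=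
    hAS i _ (Submodule.mem_iSup_of_mem i (Submodule.mem_iSup_of_mem le_rfl (hc i)))
  have ortho : (toBilin' A).iIsOrtho c := LinearMap.BilinForm.iIsOrtho_def.mpr fun i j hij => by
    rw [toBilin'_apply']
    exact horth i j hij _ (hc i) _ (hc j)
  have nonneg (i) : 0 ≤ toBilin' A (c i) (c i) := by
    rw [toBilin'_apply']
    exact (mul_nonneg (hμ i).le (sq_nonneg _)).trans (coercive i)
  simpa only [toBilin'_apply'] using
    abs_apply_sum_self_le_of_iIsOrtho (isSymm_toBilin'_iff_isSymm.mpr hE) ortho nonneg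
      (fun i => div_nonneg (hη i) (hμ i).le) fun i => by
        simpa only [toBilin'_apply'] using
          abs_dotProduct_mulVec_le_div_mul_sqrt hE (hη i) (hμ i) (hES i _ (hc i)) (coercive i)
            (hAS i _ (doubledTail_mem_iSup hc i))

end EuclideanBound

section SpectralEquivalence

variable {m : Type*} [Fintype m] {A B : Matrix m m ℝ} {a b : ℝ}

/-- The quadratic form of `B` lies between `a` and `b` times that of `A`, i.e. `a A ≤ B ≤ b A` in
the Loewner order when `A` and `B` are symmetric; this is what controls the spectrum of `B⁻¹ A`. -/
def SpectrallyEquivalent (a b : ℝ) (A B : Matrix m m ℝ) : Prop :=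
  ∀ v : m → ℝ, a * (v ⬝ᵥ A *ᵥ v) ≤ v ⬝ᵥ B *ᵥ v ∧ v ⬝ᵥ B *ᵥ v ≤ b * (v ⬝ᵥ A *ᵥ v)

theorem dotProduct_mulVec_self_pos (hA : A.PosDef) {v : m → ℝ} (hv : v ≠ 0) :
    0 < v ⬝ᵥ A *ᵥ v := by
  simpa only [star_trivial] using hA.dotProduct_mulVec_pos hv

theorem pos_of_mulVec_eq_smul (hA : A.PosDef) {lam : ℝ} {v : m → ℝ} (hv : v ≠ 0)
    (heig : A *ᵥ v = lam • v) : 0 < lam := by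
  have h := dotProduct_mulVec_self_pos hA hv
  rw [heig, dotProduct_smul, smul_eq_mul] at h
  exact pos_of_mul_pos_left h (by simpa only [star_trivial] using dotProduct_star_self_nonneg v)

theorem spectrallyEquivalent_of_abs_dotProduct_mulVec_sub_le {δ : ℝ}
    (h : ∀ v : m → ℝ, |v ⬝ᵥ (A - B) *ᵥ v| ≤ δ * (v ⬝ᵥ A *ᵥ v)) :
    SpectrallyEquivalent (1 - δ) (1 + δ) A B := by
  intro v
  have hv := abs_le.mp (h v)
  rw [sub_mulVec, dotProduct_sub] at hv
  constructor <;> linarith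

namespace SpectrallyEquivalent

theorem posDef (h : SpectrallyEquivalent a b A B) (hA : A.PosDef) (hB : B.IsSymm) (ha : 0 < a) :
    B.PosDef := by
  refine .of_dotProduct_mulVec_pos (isHermitian_iff_isSymm.mpr hB) fun v hv => ?_
  rw [star_trivial]
  exact (mul_pos ha (dotProduct_mulVec_self_pos hA hv)).trans_le (h v).1

theorem upper_pos (h : SpectrallyEquivalent a b A B) (hA : A.PosDef) (ha : 0 < a) {v : m → ℝ}
    (hv : v ≠ 0) : 0 < b := by
  have hAv := dotProduct_mulVec_self_pos hA hv
  exact pos_of_mul_pos_left ((mul_pos ha hAv).trans_le ((h v).1.trans (h v).2)) hAv.le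

variable [DecidableEq m]

theorem eigenvalue_mem_Icc (h : SpectrallyEquivalent a b A B) (hA : A.PosDef) (hB : B.IsSymm)
    (ha : 0 < a) {ρ : ℝ} {v : m → ℝ} (hv : v ≠ 0) (heig : (B⁻¹ * A) *ᵥ v = ρ • v) :
    ρ ∈ Set.Icc (1 / b) (1 / a) := by
  have hBpos := h.posDef hA hB ha
  have generalized_eig : A *ᵥ v = ρ • B *ᵥ v := by
    rw [← mulVec_smul, ← heig, mulVec_mulVec,
      mul_nonsing_inv_cancel_left _ _ hBpos.det_pos.ne'.isUnit]
  have hBv := dotProduct_mulVec_self_pos hBpos hv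
  have rayleigh : ρ = (v ⬝ᵥ A *ᵥ v) / (v ⬝ᵥ B *ᵥ v) := by
    rw [eq_div_iff hBv.ne', generalized_eig, dotProduct_smul, smul_eq_mul]
  obtain ⟨lower, upper⟩ := h v
  rw [rayleigh, Set.mem_Icc, div_le_div_iff₀ (h.upper_pos hA ha hv) hBv, div_le_div_iff₀ hBv ha]
  constructor <;> linarith

theorem eigenvalue_div_eigenvalue_le (h : SpectrallyEquivalent a b A B) (hA : A.PosDef)
    (hB : B.IsSymm) (ha : 0 < a) {ρ₁ ρ₂ : ℝ} {v₁ v₂ : m → ℝ} (hv₁ : v₁ ≠ 0) (hv₂ : v₂ ≠ 0)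
    (heig₁ : (B⁻¹ * A) *ᵥ v₁ = ρ₁ • v₁) (heig₂ : (B⁻¹ * A) *ᵥ v₂ = ρ₂ • v₂) :
    ρ₁ / ρ₂ ≤ b / a := by
  have hb := h.upper_pos hA ha hv₁
  calc ρ₁ / ρ₂ ≤ (1 / a) / (1 / b) :=
        div_le_div₀ (one_div_pos.mpr ha).le (h.eigenvalue_mem_Icc hA hB ha hv₁ heig₁).2
          (one_div_pos.mpr hb) (h.eigenvalue_mem_Icc hA hB ha hv₂ heig₂).1
    _ = b / a := by rw [div_div_div_comm, div_self one_ne_zero, one_div_div]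

end SpectrallyEquivalent

end SpectralEquivalence

/-- Theorem on the condition number of the preconditioned system.
Let `A` be SPD with largest eigenvalue `λ_max` and `A_H` symmetric.  Let
`S 0, …, S N` be subspaces of ℝⁿ forming an A-orthogonal direct sum of ℝⁿ.
Assume `‖(A − A_H)v‖ ≤ εᵢ·λ_max·‖v‖` on `Sᵢ`, `vᵀAv ≥ μᵢ‖v‖²` on
`Pᵢ := Sᵢ + … + S N` (`μᵢ > 0`), and
`δ := ε_N·λ_max/μ_N + (2/√3)·∑_{i<N} εᵢ·λ_max/μᵢ < 1`.  Then
`(1 − δ)·vᵀAv ≤ vᵀA_Hv ≤ (1 + δ)·vᵀAv` for every `v`; in particular `A_H` is SPD,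
every eigenvalue `ρ` of `A_H⁻¹A` satisfies `1/(1+δ) ≤ ρ ≤ 1/(1−δ)`, and
`κ(A_H⁻¹A) ≤ (1+δ)/(1−δ)`. -/
theorem condition_number_of_preconditioned_system {n N : ℕ}
    (A AH : Matrix (Fin n) (Fin n) ℝ)
    (hA : A.PosDef) (hAH : AH.IsSymm)
    (lammax : ℝ)
    (hmaxev : ∃ v : Fin n → ℝ, v ≠ 0 ∧ A.mulVec v = lammax • v)
    (hmaxub : ∀ (lam : ℝ) (v : Fin n → ℝ), v ≠ 0 → A.mulVec v = lam • v → lam ≤ lammax)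
    (S : Fin (N + 1) → Submodule ℝ (Fin n → ℝ))
    (hspan : ∀ v : Fin n → ℝ, ∃ c : Fin (N + 1) → Fin n → ℝ,
        (∀ i, c i ∈ S i) ∧ v = ∑ i, c i)
    (hindep : ∀ i, S i ⊓ (⨆ j, ⨆ (_ : j ≠ i), S j) = ⊥)
    (horth : ∀ i j, i ≠ j → ∀ vi ∈ S i, ∀ vj ∈ S j, vi ⬝ᵥ A.mulVec vj = 0)
    (ε : Fin (N + 1) → ℝ) (hε : ∀ i, 0 ≤ ε i)
    (happrox : ∀ i, ∀ v ∈ S i,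
        _root_.enorm ((A - AH).mulVec v) ≤ ε i * lammax * _root_.enorm v)
    (μ : Fin (N + 1) → ℝ) (hμpos : ∀ i, 0 < μ i)
    (hμ : ∀ i, ∀ v ∈ (⨆ j, ⨆ (_ : i ≤ j), S j),
        μ i * _root_.enorm v ^ 2 ≤ v ⬝ᵥ A.mulVec v)
    (δ : ℝ)
    (hδ : δ = ε (Fin.last N) * lammax / μ (Fin.last N)
            + 2 / Real.sqrt 3 * ∑ i : Fin N, ε i.castSucc * lammax / μ i.castSucc)
    (hδ1 : δ < 1) :
    (∀ v : Fin n → ℝ,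
        (1 - δ) * (v ⬝ᵥ A.mulVec v) ≤ v ⬝ᵥ AH.mulVec v ∧
        v ⬝ᵥ AH.mulVec v ≤ (1 + δ) * (v ⬝ᵥ A.mulVec v)) ∧
    AH.PosDef ∧
    (∀ (ρ : ℝ) (v : Fin n → ℝ), v ≠ 0 → (AH⁻¹ * A).mulVec v = ρ • v →
        1 / (1 + δ) ≤ ρ ∧ ρ ≤ 1 / (1 - δ)) ∧
    (∀ (ρ₁ ρ₂ : ℝ) (v₁ v₂ : Fin n → ℝ), v₁ ≠ 0 → v₂ ≠ 0 →
        (AH⁻¹ * A).mulVec v₁ = ρ₁ • v₁ → (AH⁻¹ * A).mulVec v₂ = ρ₂ • v₂ →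
        ρ₁ / ρ₂ ≤ (1 + δ) / (1 - δ)) := by
  have hlam : 0 < lammax := by
    obtain ⟨v, hv, heig⟩ := hmaxev
    exact pos_of_mulVec_eq_smul hA hv heig
  have hAsymm : A.IsSymm := isHermitian_iff_isSymm.mp hA.isHermitian
  have hequiv : SpectrallyEquivalent (1 - δ) (1 + δ) A AH := by
    refine spectrallyEquivalent_of_abs_dotProduct_mulVec_sub_le fun v => ?_
    obtain ⟨c, hc, rfl⟩ := hspan v
    rw [hδ]
    exact abs_dotProduct_mulVec_sum_self_le (hAsymm.sub hAH) horth
      (fun i => mul_nonneg (hε i) hlam.le) hμpos happrox hμ hc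
  have hδ' : 0 < 1 - δ := sub_pos.mpr hδ1
  exact ⟨hequiv, hequiv.posDef hA hAH hδ',
    fun _ _ hv heig => hequiv.eigenvalue_mem_Icc hA hAH hδ' hv heig,
    fun _ _ _ _ hv₁ hv₂ heig₁ heig₂ =>
      hequiv.eigenvalue_div_eigenvalue_le hA hAH hδ' hv₁ hv₂ heig₁ heig₂⟩
end

section
/- Let A be an n×n real symmetric positive definite matrix with largest eigenvalue λ_max and smallest eigenvalue λ_min, and condition number κ(A) = λ_max/λ_min. Let A_H be an n×n real symmetric matrix with ‖(A − A_H)v‖ ≤ ε·λ_max·‖v‖ for all v ∈ ℝⁿ, where ε ≥ 0 satisfies ε·κ(A) < 1. Then for every v ∈ ℝⁿ, (1 − ε·κ(A))·vᵀAv ≤ vᵀA_H v ≤ (1 + ε·κ(A))·vᵀAv; consequently A_H is symmetric positive definite and every eigenvalue ρ of A_H⁻¹A satisfies 1/(1 + ε·κ(A)) ≤ ρ ≤ 1/(1 − ε·κ(A)), so κ(A_H⁻¹A) ≤ (1 + ε·κ(A))/(1 − ε·κ(A)). -/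
open Matrix

/-!
Everything happens in the Loewner order. If all eigenvalues of `A` are at least `m > 0` then
`m • 1 ≤ A`, and the two Hermitian matrices `±(A - B)`, whose eigenvalues are at most `δ * m` by the
norm bound, satisfy `±(A - B) ≤ δ • m • 1 ≤ δ • A`. Hence `(1 - δ) • A ≤ B ≤ (1 + δ) • A`. An
eigenvalue of `B⁻¹ * A` is the quotient of the quadratic forms of `A` and `B` at its eigenvector, so
it is trapped by these two inequalities. The theorem is the case `δ * λ_min = ε * λ_max`.
-/

section Loewner

open scoped ComplexOrder MatrixOrder

variable {ι 𝕜 : Type*} [RCLike 𝕜] {A B : Matrix ι ι 𝕜}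

theorem posDef_of_posDef_of_le (hA : A.PosDef) (h : A ≤ B) : B.PosDef := by
  simpa only [add_sub_cancel] using hA.add_posSemidef h

variable [Fintype ι]

theorem dotProduct_mulVec_le_of_le (h : A ≤ B) (v : ι → 𝕜) :
    star v ⬝ᵥ A *ᵥ v ≤ star v ⬝ᵥ B *ᵥ v := by
  simpa only [sub_mulVec, dotProduct_sub, sub_nonneg] using h.dotProduct_mulVec_nonneg v

theorem eigenvalue_pos_of_posDef (hA : A.PosDef) {μ : ℝ} {v : ι → 𝕜} (hv : v ≠ 0)
    (h : A *ᵥ v = μ • v) : 0 < μ := by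
  have rayleigh_pos : 0 < μ • (star v ⬝ᵥ v) := by
    simpa only [h, dotProduct_smul] using hA.dotProduct_mulVec_pos hv
  exact pos_of_smul_pos_right rayleigh_pos (dotProduct_star_self_nonneg v)

variable [DecidableEq ι]

theorem exists_eigenvector_of_mem_spectrum (hA : A.IsHermitian) {μ : ℝ} (hμ : μ ∈ spectrum ℝ A) :
    ∃ v : ι → 𝕜, v ≠ 0 ∧ A *ᵥ v = μ • v := by
  obtain ⟨i, rfl⟩ := hA.spectrum_real_eq_range_eigenvalues ▸ hμ
  exact ⟨hA.eigenvectorBasis i,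
    (WithLp.ofLp_eq_zero 2).not.2 (hA.eigenvectorBasis.orthonormal.ne_zero i),
    hA.mulVec_eigenvectorBasis i⟩

theorem smul_one_le_of_forall_le_eigenvalue (hA : A.IsHermitian) {m : ℝ}
    (hm : ∀ (μ : ℝ) (v : ι → 𝕜), v ≠ 0 → A *ᵥ v = μ • v → m ≤ μ) :
    m • (1 : Matrix ι ι 𝕜) ≤ A := by
  rw [← Algebra.algebraMap_eq_smul_one, algebraMap_le_iff_le_spectrum hA.isSelfAdjoint]
  intro μ hμ
  obtain ⟨v, hv, hAv⟩ := exists_eigenvector_of_mem_spectrum hA hμ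
  exact hm μ v hv hAv

theorem le_smul_one_of_forall_norm_mulVec_le (hA : A.IsHermitian) {η : ℝ}
    (hη : ∀ v : ι → 𝕜, ‖WithLp.toLp 2 (A *ᵥ v)‖ ≤ η * ‖WithLp.toLp 2 v‖) :
    A ≤ η • (1 : Matrix ι ι 𝕜) := by
  rw [← Algebra.algebraMap_eq_smul_one, le_algebraMap_iff_spectrum_le hA.isSelfAdjoint]
  intro μ hμ
  obtain ⟨v, hv, hAv⟩ := exists_eigenvector_of_mem_spectrum hA hμ
  have norm_pos : 0 < ‖WithLp.toLp 2 v‖ := norm_pos_iff.2 ((WithLp.toLp_eq_zero 2).not.2 hv)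
  have abs_mul_le : |μ| * ‖WithLp.toLp 2 v‖ ≤ η * ‖WithLp.toLp 2 v‖ := by
    simpa only [hAv, WithLp.toLp_smul, norm_smul, Real.norm_eq_abs] using hη v
  exact (le_abs_self μ).trans (le_of_mul_le_mul_right abs_mul_le norm_pos)

theorem le_smul_of_forall_norm_mulVec_le {E : Matrix ι ι 𝕜} (hE : E.IsHermitian) {m δ : ℝ}
    (hδ : 0 ≤ δ) (hA : m • (1 : Matrix ι ι 𝕜) ≤ A)
    (h : ∀ v : ι → 𝕜, ‖WithLp.toLp 2 (E *ᵥ v)‖ ≤ δ * m * ‖WithLp.toLp 2 v‖) :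
    E ≤ δ • A :=
  calc E ≤ (δ * m) • (1 : Matrix ι ι 𝕜) := le_smul_one_of_forall_norm_mulVec_le hE h
    _ = δ • m • (1 : Matrix ι ι 𝕜) := mul_smul δ m 1
    _ ≤ δ • A := smul_le_smul_of_nonneg_left hA hδ

theorem mulVec_eq_smul_mulVec_of_inv_mul_mulVec_eq_smul (hB : IsUnit B) {ρ : 𝕜} {v : ι → 𝕜}
    (h : (B⁻¹ * A) *ᵥ v = ρ • v) : A *ᵥ v = ρ • B *ᵥ v := by
  rw [← mulVec_smul, ← h, mulVec_mulVec,
    mul_nonsing_inv_cancel_left B A ((isUnit_iff_isUnit_det B).1 hB)]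

theorem inv_mul_eigenvalue_eq_rayleigh (hB : B.PosDef) {ρ : 𝕜} {v : ι → 𝕜} (hv : v ≠ 0)
    (h : (B⁻¹ * A) *ᵥ v = ρ • v) : ρ = (star v ⬝ᵥ A *ᵥ v) / (star v ⬝ᵥ B *ᵥ v) := by
  rw [eq_div_iff (hB.dotProduct_mulVec_pos hv).ne',
    mulVec_eq_smul_mulVec_of_inv_mul_mulVec_eq_smul hB.isUnit h, dotProduct_smul, smul_eq_mul]

theorem inv_mul_eigenvalue_le (hB : B.PosDef) {c : ℝ} (hc : 0 < c) (h : c • A ≤ B)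
    {ρ : 𝕜} {v : ι → 𝕜} (hv : v ≠ 0) (hρ : (B⁻¹ * A) *ᵥ v = ρ • v) :
    ρ ≤ ((1 / c : ℝ) : 𝕜) := by
  have form_le := dotProduct_mulVec_le_of_le h v
  rw [smul_mulVec, dotProduct_smul, RCLike.real_smul_eq_coe_mul] at form_le
  rw [inv_mul_eigenvalue_eq_rayleigh hB hv hρ, RCLike.ofReal_div, RCLike.ofReal_one,
    div_le_div_iff₀ (hB.dotProduct_mulVec_pos hv) (RCLike.ofReal_pos.2 hc), one_mul, mul_comm]
  exact form_le

theorem le_inv_mul_eigenvalue (hB : B.PosDef) {c : ℝ} (hc : 0 < c) (h : B ≤ c • A)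
    {ρ : 𝕜} {v : ι → 𝕜} (hv : v ≠ 0) (hρ : (B⁻¹ * A) *ᵥ v = ρ • v) :
    ((1 / c : ℝ) : 𝕜) ≤ ρ := by
  have form_le := dotProduct_mulVec_le_of_le h v
  rw [smul_mulVec, dotProduct_smul, RCLike.real_smul_eq_coe_mul] at form_le
  rw [inv_mul_eigenvalue_eq_rayleigh hB hv hρ, RCLike.ofReal_div, RCLike.ofReal_one,
    div_le_div_iff₀ (RCLike.ofReal_pos.2 hc) (hB.dotProduct_mulVec_pos hv), one_mul, mul_comm]
  exact form_le

theorem inv_mul_eigenvalue_div_le (hB : B.PosDef) {c d : ℝ} (hc : 0 < c) (hd : 0 < d)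
    (hcA : c • A ≤ B) (hdA : B ≤ d • A) {ρ₁ ρ₂ : 𝕜} {v₁ v₂ : ι → 𝕜} (hv₁ : v₁ ≠ 0) (hv₂ : v₂ ≠ 0)
    (hρ₁ : (B⁻¹ * A) *ᵥ v₁ = ρ₁ • v₁) (hρ₂ : (B⁻¹ * A) *ᵥ v₂ = ρ₂ • v₂) :
    ρ₁ / ρ₂ ≤ ((d / c : ℝ) : 𝕜) := by
  have le_inv_c := inv_mul_eigenvalue_le hB hc hcA hv₁ hρ₁
  have inv_d_le := le_inv_mul_eigenvalue hB hd hdA hv₂ hρ₂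
  have inv_d_pos : (0 : 𝕜) < ((1 / d : ℝ) : 𝕜) := RCLike.ofReal_pos.2 (one_div_pos.2 hd)
  have inv_c_nonneg : (0 : 𝕜) ≤ ((1 / c : ℝ) : 𝕜) := RCLike.ofReal_nonneg.2 (one_div_pos.2 hc).le
  calc ρ₁ / ρ₂ ≤ ((1 / c : ℝ) : 𝕜) / ((1 / d : ℝ) : 𝕜) :=
        div_le_div₀ inv_c_nonneg le_inv_c inv_d_pos inv_d_le
    _ = ((d / c : ℝ) : 𝕜) := by rw [← RCLike.ofReal_div]; field_simp

theorem preconditioner_uniform_accuracy_general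
    (hA : A.IsHermitian) (hB : B.IsHermitian) {m δ : ℝ} (hm : 0 < m)
    (hmA : ∀ (μ : ℝ) (v : ι → 𝕜), v ≠ 0 → A *ᵥ v = μ • v → m ≤ μ)
    (hδ : 0 ≤ δ) (hδ1 : δ < 1)
    (hAB : ∀ v : ι → 𝕜, ‖WithLp.toLp 2 ((A - B) *ᵥ v)‖ ≤ δ * m * ‖WithLp.toLp 2 v‖) :
    (∀ v : ι → 𝕜,
        (1 - δ) • (star v ⬝ᵥ A *ᵥ v) ≤ star v ⬝ᵥ B *ᵥ v ∧
        star v ⬝ᵥ B *ᵥ v ≤ (1 + δ) • (star v ⬝ᵥ A *ᵥ v)) ∧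
    B.PosDef ∧
    (∀ (ρ : 𝕜) (v : ι → 𝕜), v ≠ 0 → (B⁻¹ * A) *ᵥ v = ρ • v →
        ((1 / (1 + δ) : ℝ) : 𝕜) ≤ ρ ∧ ρ ≤ ((1 / (1 - δ) : ℝ) : 𝕜)) ∧
    (∀ (ρ₁ ρ₂ : 𝕜) (v₁ v₂ : ι → 𝕜), v₁ ≠ 0 → v₂ ≠ 0 →
        (B⁻¹ * A) *ᵥ v₁ = ρ₁ • v₁ → (B⁻¹ * A) *ᵥ v₂ = ρ₂ • v₂ →
        ρ₁ / ρ₂ ≤ (((1 + δ) / (1 - δ) : ℝ) : 𝕜)) := by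
  have hBA : ∀ v : ι → 𝕜, ‖WithLp.toLp 2 ((B - A) *ᵥ v)‖ ≤ δ * m * ‖WithLp.toLp 2 v‖ := by
    intro v
    simpa only [← neg_sub A B, neg_mulVec, WithLp.toLp_neg, norm_neg] using hAB v
  have one_sub_pos : 0 < 1 - δ := sub_pos.2 hδ1
  have one_add_pos : 0 < 1 + δ := by positivity
  have m_le : m • (1 : Matrix ι ι 𝕜) ≤ A := smul_one_le_of_forall_le_eigenvalue hA hmA
  have lower : (1 - δ) • A ≤ B := by
    rw [sub_smul, one_smul, sub_le_comm]
    exact le_smul_of_forall_norm_mulVec_le (hA.sub hB) hδ m_le hAB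
  have upper : B ≤ (1 + δ) • A := by
    rw [add_smul, one_smul, ← sub_le_iff_le_add']
    exact le_smul_of_forall_norm_mulVec_le (hB.sub hA) hδ m_le hBA
  have hA_pos : A.PosDef := posDef_of_posDef_of_le (PosDef.one.smul hm) m_le
  have hB_pos : B.PosDef := posDef_of_posDef_of_le (hA_pos.smul one_sub_pos) lower
  refine ⟨fun v => ⟨?_, ?_⟩, hB_pos, fun ρ v hv hρ =>
    ⟨le_inv_mul_eigenvalue hB_pos one_add_pos upper hv hρ,
      inv_mul_eigenvalue_le hB_pos one_sub_pos lower hv hρ⟩,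
    fun ρ₁ ρ₂ v₁ v₂ => inv_mul_eigenvalue_div_le hB_pos one_sub_pos one_add_pos lower upper⟩
  · simpa only [smul_mulVec, dotProduct_smul] using dotProduct_mulVec_le_of_le lower v
  · simpa only [smul_mulVec, dotProduct_smul] using dotProduct_mulVec_le_of_le upper v

end Loewner

theorem enorm_eq_norm_toLp {n : ℕ} (v : Fin n → ℝ) : _root_.enorm v = ‖WithLp.toLp 2 v‖ := by
  simp only [_root_.enorm, EuclideanSpace.norm_eq, Real.norm_eq_abs, sq_abs]

/-- Uniform accuracy case.  If `A` is SPD with extreme eigenvalues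
`λ_max, λ_min`, `A_H` is symmetric with `‖(A − A_H)v‖ ≤ ε·λ_max·‖v‖` for all `v`,
and `ε·κ(A) < 1` with `κ(A) = λ_max/λ_min`, then
`(1 − ε·κ(A))·vᵀAv ≤ vᵀA_Hv ≤ (1 + ε·κ(A))·vᵀAv` for all `v`; consequently `A_H`
is SPD and every eigenvalue `ρ` of `A_H⁻¹A` satisfies
`1/(1 + ε·κ(A)) ≤ ρ ≤ 1/(1 − ε·κ(A))`, so `κ(A_H⁻¹A) ≤ (1 + ε·κ(A))/(1 − ε·κ(A))`. -/
theorem preconditioner_uniform_accuracy {n : ℕ}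
    (A AH : Matrix (Fin n) (Fin n) ℝ)
    (hA : A.PosDef) (hAH : AH.IsSymm)
    (lammax lammin : ℝ)
    (hmaxev : ∃ v : Fin n → ℝ, v ≠ 0 ∧ A.mulVec v = lammax • v)
    (hmaxub : ∀ (lam : ℝ) (v : Fin n → ℝ), v ≠ 0 → A.mulVec v = lam • v → lam ≤ lammax)
    (hminev : ∃ v : Fin n → ℝ, v ≠ 0 ∧ A.mulVec v = lammin • v)
    (hminlb : ∀ (lam : ℝ) (v : Fin n → ℝ), v ≠ 0 → A.mulVec v = lam • v → lammin ≤ lam)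
    (ε : ℝ) (hε : 0 ≤ ε)
    (happrox : ∀ v : Fin n → ℝ, _root_.enorm ((A - AH).mulVec v) ≤ ε * lammax * _root_.enorm v)
    (δ : ℝ) (hδ : δ = ε * (lammax / lammin)) (hδ1 : δ < 1) :
    (∀ v : Fin n → ℝ,
        (1 - δ) * (v ⬝ᵥ A.mulVec v) ≤ v ⬝ᵥ AH.mulVec v ∧
        v ⬝ᵥ AH.mulVec v ≤ (1 + δ) * (v ⬝ᵥ A.mulVec v)) ∧
    AH.PosDef ∧
    (∀ (ρ : ℝ) (v : Fin n → ℝ), v ≠ 0 → (AH⁻¹ * A).mulVec v = ρ • v →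
        1 / (1 + δ) ≤ ρ ∧ ρ ≤ 1 / (1 - δ)) ∧
    (∀ (ρ₁ ρ₂ : ℝ) (v₁ v₂ : Fin n → ℝ), v₁ ≠ 0 → v₂ ≠ 0 →
        (AH⁻¹ * A).mulVec v₁ = ρ₁ • v₁ → (AH⁻¹ * A).mulVec v₂ = ρ₂ • v₂ →
        ρ₁ / ρ₂ ≤ (1 + δ) / (1 - δ)) := by
  obtain ⟨vmax, hvmax, hAvmax⟩ := hmaxev
  obtain ⟨vmin, hvmin, hAvmin⟩ := hminev
  have lammax_pos : 0 < lammax := eigenvalue_pos_of_posDef hA hvmax hAvmax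
  have lammin_pos : 0 < lammin := eigenvalue_pos_of_posDef hA hvmin hAvmin
  have δ_nonneg : 0 ≤ δ := by rw [hδ]; positivity
  have radius_eq : ε * lammax = δ * lammin := by rw [hδ]; field_simp
  simp only [enorm_eq_norm_toLp, radius_eq] at happrox
  have hAH' : AH.IsHermitian := by rwa [IsHermitian, conjTranspose_eq_transpose_of_trivial]
  simpa using preconditioner_uniform_accuracy_general hA.isHermitian hAH' lammin_pos hminlb
    δ_nonneg hδ1 happrox
end

section
/- Let 𝒜₋ and 𝒜̃₋ be n×n real matrices, 𝒦 and 𝒦̃ be m×n real matrices, and ℳ and ℳ̃ be invertible m×m real matrices. Define 𝒜 := 𝒜₋ − 𝒦ᵀℳ⁻¹𝒦 and 𝒜̃ := 𝒜̃₋ − 𝒦̃ᵀℳ̃⁻¹𝒦̃, and the extended matrices 𝒜_E := [[𝒜₋, 𝒦ᵀ],[𝒦, ℳ]] and 𝒜̃_E := [[𝒜̃₋, 𝒦̃ᵀ],[𝒦̃, ℳ̃]]. Given φ ∈ ℝⁿ, let ξ := −ℳ⁻¹𝒦φ and φ_E := (φ; ξ). If 𝒜̃_E φ_E = 𝒜_E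 φ_E, then 𝒜̃φ = 𝒜φ. -/
open Matrix

/-!
The second block row of `[[A, B], [C, D]] (x; y)` vanishes exactly when `y = -D⁻¹ C x`, and for this
`y` the first block row is the Schur complement applied to `x`. Agreement of the second block rows
therefore makes the same `y` eliminate the extension variables of both block matrices, and
agreement of the first block rows is then agreement of the Schur complements on `x`.
-/

section SchurComplement

variable {l m n p R : Type*} [Fintype m] [Fintype n]

theorem sub_mul_mul_mulVec [Fintype p] [NonUnitalRing R] (A : Matrix l n R) (B : Matrix l m R)
    (E : Matrix m p R) (C : Matrix p n R) (x : n → R) :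
    (A - B * E * C) *ᵥ x = A *ᵥ x + B *ᵥ (-(E *ᵥ (C *ᵥ x))) := by
  rw [sub_mulVec, mulVec_neg, mulVec_mulVec, mulVec_mulVec, Matrix.mul_assoc, sub_eq_add_neg]

variable [DecidableEq m] [CommRing R]

theorem mulVec_add_mulVec_eq_zero_iff_eq_neg_inv_mulVec {C : Matrix m n R} {D : Matrix m m R}
    (hD : IsUnit D.det) {x : n → R} {y : m → R} :
    C *ᵥ x + D *ᵥ y = 0 ↔ y = -(D⁻¹ *ᵥ (C *ᵥ x)) := by
  constructor
  · intro h
    rw [eq_neg_of_add_eq_zero_left h, mulVec_neg, neg_neg, mulVec_mulVec, nonsing_inv_mul D hD,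
      one_mulVec]
  · rintro rfl
    rw [mulVec_neg, mulVec_mulVec, mul_nonsing_inv D hD, one_mulVec, add_neg_cancel]

theorem preserve_vector_during_extension_general
    {A A' : Matrix l n R} {B B' : Matrix l m R} {C C' : Matrix m n R} {D D' : Matrix m m R}
    (hD : IsUnit D.det) (hD' : IsUnit D'.det) {x : n → R} {y : m → R}
    (hy : y = -(D⁻¹ *ᵥ (C *ᵥ x)))
    (htop : A' *ᵥ x + B' *ᵥ y = A *ᵥ x + B *ᵥ y)
    (hbot : C' *ᵥ x + D' *ᵥ y = C *ᵥ x + D *ᵥ y) :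
    (A' - B' * D'⁻¹ * C') *ᵥ x = (A - B * D⁻¹ * C) *ᵥ x := by
  have hrow : C *ᵥ x + D *ᵥ y = 0 := (mulVec_add_mulVec_eq_zero_iff_eq_neg_inv_mulVec hD).2 hy
  have hy' : y = -(D'⁻¹ *ᵥ (C' *ᵥ x)) :=
    (mulVec_add_mulVec_eq_zero_iff_eq_neg_inv_mulVec hD').1 (hbot.trans hrow)
  calc (A' - B' * D'⁻¹ * C') *ᵥ x = A' *ᵥ x + B' *ᵥ y := by rw [sub_mul_mul_mulVec, ← hy']
    _ = A *ᵥ x + B *ᵥ y := htop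
    _ = (A - B * D⁻¹ * C) *ᵥ x := by rw [sub_mul_mul_mulVec, ← hy]

end SchurComplement

/-- Let `𝒜 := 𝒜₋ − 𝒦ᵀℳ⁻¹𝒦` and `𝒜̃ := 𝒜̃₋ − 𝒦̃ᵀℳ̃⁻¹𝒦̃` be the Schur
complements of the extended matrices `𝒜_E = [[𝒜₋,𝒦ᵀ],[𝒦,ℳ]]` and
`𝒜̃_E = [[𝒜̃₋,𝒦̃ᵀ],[𝒦̃,ℳ̃]]`. With `ξ := −ℳ⁻¹𝒦φ` and `φ_E = (φ; ξ)`, if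
`𝒜̃_E φ_E = 𝒜_E φ_E` then `𝒜̃φ = 𝒜φ`. -/
theorem preserve_vector_during_extension {n m : ℕ}
    (Am Amt : Matrix (Fin n) (Fin n) ℝ)
    (K Kt : Matrix (Fin m) (Fin n) ℝ)
    (M Mt : Matrix (Fin m) (Fin m) ℝ)
    (hM : IsUnit M.det) (hMt : IsUnit Mt.det)
    (φ : Fin n → ℝ) (ξ : Fin m → ℝ)
    (hξ : ξ = -(M⁻¹.mulVec (K.mulVec φ)))
    (htop : Amt.mulVec φ + Ktᵀ.mulVec ξ = Am.mulVec φ + Kᵀ.mulVec ξ)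
    (hbot : Kt.mulVec φ + Mt.mulVec ξ = K.mulVec φ + M.mulVec ξ) :
    (Amt - Ktᵀ * Mt⁻¹ * Kt).mulVec φ = (Am - Kᵀ * M⁻¹ * K).mulVec φ :=
  preserve_vector_during_extension_general hM hMt hξ htop hbot
end

section
/- Let B be a real matrix and let U₁ˢ, U₁ʷ, U₂ be real matrices with orthonormal columns (of conformal sizes), and set P_s := U₁ˢ(U₁ˢ)ᵀ, P_w := U₁ʷ(U₁ʷ)ᵀ, Q := U₂U₂ᵀ. Define B̃ᵀ := Bᵀ − (I − Q)(I − P_s)Bᵀ(I − P_w). Let X_s and X_w be real matrices with ‖(I − P_s)X_s‖ ≤ ε₁‖X_s‖ and ‖(I − P_w)X_w‖ ≤ ε₁‖X_w‖, and assume ‖Bᵀ − B̃ᵀ‖ ≤ ε₂‖Bᵀ‖, where ε₁, ε₂ ≥ 0. Then ‖(Bᵀ − B̃ᵀ)X_w‖ ≤ ε₁·ε₂·‖Bᵀ‖·‖X_w‖; and if in addition (U₁ˢ)ᵀU₂ = 0, then also ‖(B − B̃)X_s‖ ≤ ε₁·ε₂·‖Bᵀ‖·‖X_s‖. -/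
open Matrix

/-- Spectral (ℓ²-operator) norm of a real matrix. -/
noncomputable def specNorm {m n : Type*} [Fintype m] [Fintype n] [DecidableEq n]
    (M : Matrix m n ℝ) : ℝ :=
  ‖LinearMap.toContinuousLinearMap (Matrix.toEuclideanLin M)‖

/-! The residual `E = (1 - Q)(1 - P_s)Bᴴ(1 - P_w)` satisfies `E U₁w = 0`, so it sees `X_w` only
through `(1 - P_w)X_w`: since `E X_w = E (1 - P_w)X_w`, submultiplicativity of the norm yields the
factors `ε₂` and `ε₁`. When `U₁s` and `U₂` are orthogonal, `1 - Q` fixes `U₁s`, so `Eᴴ U₁s = 0` and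
the same argument applies to `Eᴴ` and `X_s`. -/

open scoped Matrix.Norms.L2Operator

section RectangularProducts

variable {l m n p R : Type*} [Fintype m] [Fintype p] [DecidableEq m] [Ring R]

theorem matrix_mul_one_sub_mul_of_mul_eq_zero {E : Matrix l m R} {U : Matrix m p R}
    (hEU : E * U = 0) (V : Matrix p m R) : E * (1 - U * V) = E := by
  rw [Matrix.mul_sub, Matrix.mul_one, ← Matrix.mul_assoc, hEU, Matrix.zero_mul, sub_zero]

theorem matrix_one_sub_mul_mul_of_mul_eq_zero {V : Matrix p m R} {W : Matrix m n R}
    (hVW : V * W = 0) (U : Matrix m p R) : (1 - U * V) * W = W := by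
  rw [Matrix.sub_mul, Matrix.one_mul, Matrix.mul_assoc, hVW, Matrix.mul_zero, sub_zero]

theorem matrix_one_sub_mul_mul_of_mul_eq_one [DecidableEq p] {U : Matrix m p R} {V : Matrix p m R}
    (hVU : V * U = 1) : (1 - U * V) * U = 0 := by
  rw [Matrix.sub_mul, Matrix.one_mul, Matrix.mul_assoc, hVU, Matrix.mul_one, sub_self]

end RectangularProducts

section SpectralNorm

variable {𝕜 l m n p : Type*} [RCLike 𝕜] [Fintype l] [Fintype m] [Fintype n] [Fintype p]
  [DecidableEq m] [DecidableEq n]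

theorem specNorm_eq_l2_opNorm (A : Matrix l m ℝ) : specNorm A = ‖A‖ :=
  rfl

theorem l2_opNorm_mul_le_of_mul_eq_zero {E : Matrix l m 𝕜} {U : Matrix m p 𝕜} (hEU : E * U = 0)
    (V : Matrix p m 𝕜) (X : Matrix m n 𝕜) : ‖E * X‖ ≤ ‖E‖ * ‖(1 - U * V) * X‖ :=
  calc
    ‖E * X‖ = ‖E * ((1 - U * V) * X)‖ := by
      rw [← Matrix.mul_assoc, matrix_mul_one_sub_mul_of_mul_eq_zero hEU]
    _ ≤ ‖E‖ * ‖(1 - U * V) * X‖ := l2_opNorm_mul _ _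

theorem l2_opNorm_mul_le_of_mul_eq_zero_of_le {E : Matrix l m 𝕜} {U : Matrix m p 𝕜}
    {V : Matrix p m 𝕜} {X : Matrix m n 𝕜} {ε δ : ℝ} (hEU : E * U = 0) (hE : ‖E‖ ≤ δ)
    (hX : ‖(1 - U * V) * X‖ ≤ ε * ‖X‖) : ‖E * X‖ ≤ ε * δ * ‖X‖ :=
  calc
    ‖E * X‖ ≤ ‖E‖ * ‖(1 - U * V) * X‖ := l2_opNorm_mul_le_of_mul_eq_zero hEU V X
    _ ≤ δ * (ε * ‖X‖) := mul_le_mul hE hX (norm_nonneg _) ((norm_nonneg _).trans hE)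
    _ = ε * δ * ‖X‖ := by ring

end SpectralNorm

theorem second_order_symmetric_projection_general {𝕜 w s p₁ p₂ p₃ a b : Type*} [RCLike 𝕜]
    [Fintype w] [Fintype s] [Fintype p₁] [Fintype p₂] [Fintype p₃] [Fintype a] [Fintype b]
    [DecidableEq w] [DecidableEq s] [DecidableEq p₁] [DecidableEq p₂] [DecidableEq a]
    [DecidableEq b] {B : Matrix w s 𝕜} {U₁s : Matrix s p₁ 𝕜} {U₁w : Matrix w p₂ 𝕜}
    {U₂ : Matrix s p₃ 𝕜} (hU₁s : U₁sᴴ * U₁s = 1) (hU₁w : U₁wᴴ * U₁w = 1)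
    {Xs : Matrix s a 𝕜} {Xw : Matrix w b 𝕜} {ε₁ ε₂ : ℝ} {Bt : Matrix s w 𝕜}
    (hBt : Bt = Bᴴ - (1 - U₂ * U₂ᴴ) * (1 - U₁s * U₁sᴴ) * Bᴴ * (1 - U₁w * U₁wᴴ))
    (hXs : ‖(1 - U₁s * U₁sᴴ) * Xs‖ ≤ ε₁ * ‖Xs‖) (hXw : ‖(1 - U₁w * U₁wᴴ) * Xw‖ ≤ ε₁ * ‖Xw‖)
    (hB : ‖Bᴴ - Bt‖ ≤ ε₂ * ‖Bᴴ‖) :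
    ‖(Bᴴ - Bt) * Xw‖ ≤ ε₁ * ε₂ * ‖Bᴴ‖ * ‖Xw‖ ∧
      (U₁sᴴ * U₂ = 0 → ‖(B - Btᴴ) * Xs‖ ≤ ε₁ * ε₂ * ‖Bᴴ‖ * ‖Xs‖) := by
  have residual_eq : Bᴴ - Bt =
      (1 - U₂ * U₂ᴴ) * (1 - U₁s * U₁sᴴ) * Bᴴ * (1 - U₁w * U₁wᴴ) := by
    rw [hBt, sub_sub_cancel]
  have adjoint_eq : B - Btᴴ = (Bᴴ - Bt)ᴴ := by
    rw [conjTranspose_sub, conjTranspose_conjTranspose]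
  have residual_mul_U₁w : (Bᴴ - Bt) * U₁w = 0 := by
    rw [residual_eq, Matrix.mul_assoc, matrix_one_sub_mul_mul_of_mul_eq_one hU₁w, Matrix.mul_zero]
  rw [mul_assoc ε₁]
  refine ⟨l2_opNorm_mul_le_of_mul_eq_zero_of_le residual_mul_U₁w hB hXw, fun hU₁sU₂ ↦ ?_⟩
  have hU₂U₁s : U₂ᴴ * U₁s = 0 := by
    rw [← conjTranspose_eq_zero, conjTranspose_mul, conjTranspose_conjTranspose, hU₁sU₂]
  have adjoint_mul_U₁s : (Bᴴ - Bt)ᴴ * U₁s = 0 := by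
    rw [residual_eq]
    simp only [conjTranspose_mul, conjTranspose_sub, conjTranspose_one,
      conjTranspose_conjTranspose, Matrix.mul_assoc]
    rw [matrix_one_sub_mul_mul_of_mul_eq_zero hU₂U₁s, matrix_one_sub_mul_mul_of_mul_eq_one hU₁s,
      Matrix.mul_zero, Matrix.mul_zero]
  rw [adjoint_eq]
  exact l2_opNorm_mul_le_of_mul_eq_zero_of_le adjoint_mul_U₁s
    ((l2_opNorm_conjTranspose _).trans_le hB) hXs

/-- Second-order symmetric projection.  With orthonormal-column
matrices `U₁ˢ, U₁ʷ, U₂`, projections `P_s := U₁ˢ(U₁ˢ)ᵀ`, `P_w := U₁ʷ(U₁ʷ)ᵀ`,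
`Q := U₂U₂ᵀ`, approximation `B̃ᵀ := Bᵀ − (I − Q)(I − P_s)Bᵀ(I − P_w)`, and
hypotheses `‖(I − P_s)X_s‖ ≤ ε₁‖X_s‖`, `‖(I − P_w)X_w‖ ≤ ε₁‖X_w‖`,
`‖Bᵀ − B̃ᵀ‖ ≤ ε₂‖Bᵀ‖`, one has `‖(Bᵀ − B̃ᵀ)X_w‖ ≤ ε₁ε₂‖Bᵀ‖‖X_w‖`; and if in
addition `(U₁ˢ)ᵀU₂ = 0`, also `‖(B − B̃)X_s‖ ≤ ε₁ε₂‖Bᵀ‖‖X_s‖`. -/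
theorem second_order_symmetric_projection {w s p₁ p₂ p₃ a b : ℕ}
    (B : Matrix (Fin w) (Fin s) ℝ)
    (U₁s : Matrix (Fin s) (Fin p₁) ℝ) (U₁w : Matrix (Fin w) (Fin p₂) ℝ)
    (U₂ : Matrix (Fin s) (Fin p₃) ℝ)
    (hU₁s : U₁sᵀ * U₁s = 1) (hU₁w : U₁wᵀ * U₁w = 1) (hU₂ : U₂ᵀ * U₂ = 1)
    (Xs : Matrix (Fin s) (Fin a) ℝ) (Xw : Matrix (Fin w) (Fin b) ℝ)
    (ε₁ ε₂ : ℝ) (hε₁ : 0 ≤ ε₁) (hε₂ : 0 ≤ ε₂)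
    (Bt : Matrix (Fin s) (Fin w) ℝ)
    (hBt : Bt = Bᵀ - (1 - U₂ * U₂ᵀ) * (1 - U₁s * U₁sᵀ) * Bᵀ * (1 - U₁w * U₁wᵀ))
    (hXs : specNorm ((1 - U₁s * U₁sᵀ) * Xs) ≤ ε₁ * specNorm Xs)
    (hXw : specNorm ((1 - U₁w * U₁wᵀ) * Xw) ≤ ε₁ * specNorm Xw)
    (hB : specNorm (Bᵀ - Bt) ≤ ε₂ * specNorm Bᵀ) :
    specNorm ((Bᵀ - Bt) * Xw) ≤ ε₁ * ε₂ * specNorm Bᵀ * specNorm Xw ∧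
    (U₁sᵀ * U₂ = 0 →
      specNorm ((B - Btᵀ) * Xs) ≤ ε₁ * ε₂ * specNorm Bᵀ * specNorm Xs) := by
  simp only [specNorm_eq_l2_opNorm, ← conjTranspose_eq_transpose_of_trivial] at *
  exact second_order_symmetric_projection_general hU₁s hU₁w hBt hXs hXw hB
end
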